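/- Let v be a leaf of a complete d-ary tree of height h. The hitting time of a simple random walk from the ancestor of v at distance l from v to v equals g_{h,h}(d) - g_{h,h-l}(d), where g_{k,0}(d) = 0 and g_{k,m}(d) = (Σ_{i=0}^{m-1} (2m-2i) d^{k-i}) - m for m ≥ 1. -/

import Mathlib

open scoped Classical

/-- Transition probability of the simple random walk on `G`. -/
noncomputable def stepProb {V : Type*} [Fintype V] (G : SimpleGraph V) (a b : V) : ℝ :=
  if G.Adj a b then 1 / (G.degree a) else 0

/-- Probability that the simple random walk started at `u` follows the step sequence `w`. -/
noncomputable def walkProb {V : Type*} [Fintype V] (G : SimpleGraph V) :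
    (u : V) → {n : ℕ} → (Fin n → V) → ℝ
  | _, 0, _ => 1
  | u, n + 1, w => stepProb G u (w 0) * walkProb G (w 0) (fun i : Fin n => w i.succ)

/-- Probability that the walk started at `u` first reaches `v` at time exactly `n` (for `n ≥ 1`). -/
noncomputable def firstHitProb {V : Type*} [Fintype V] (G : SimpleGraph V) (u v : V) (n : ℕ) : ℝ :=
  ∑ w ∈ Finset.univ.filter (fun w : Fin n → V =>
      (∀ i : Fin n, (i : ℕ) + 1 < n → w i ≠ v) ∧ ∀ i : Fin n, (i : ℕ) + 1 = n → w i = v),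
    walkProb G u w

/-- Expected hitting time of `v` for the simple random walk on `G` started at `u`. -/
noncomputable def hittingTime {V : Type*} [Fintype V] (G : SimpleGraph V) (u v : V) : ℝ :=
  if u = v then 0 else ∑' n : ℕ, (n : ℝ) * firstHitProb G u v n

/-- Expected first return time to `v` of the simple random walk on `G` started at `v`. -/
noncomputable def expectedReturnTime {V : Type*} [Fintype V] (G : SimpleGraph V) (v : V) : ℝ :=
  ∑' n : ℕ, (n : ℝ) * firstHitProb G v v n
/-- The polynomial `g_{k,m}(d)` from the hitting-time formulas for complete `d`-ary trees. -/
noncomputable def g (k m : ℕ) (d : ℝ) : ℝ :=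
  if m = 0 then 0 else (∑ i ∈ Finset.range m, ((2 * m : ℝ) - 2 * i) * d ^ (k - i)) - m

/-- The complete `d`-ary tree of height `h`: vertices are sequences over `Fin d` of
length at most `h`, and a vertex is adjacent to each of its one-step extensions. -/
def daryTree (d h : ℕ) : SimpleGraph (Σ n : Fin (h + 1), Fin (n : ℕ) → Fin d) :=
  SimpleGraph.fromRel (fun x y =>
    ∃ _ : (x.1 : ℕ) + 1 = (y.1 : ℕ),
      ∀ i : Fin (x.1 : ℕ), y.2 ⟨i.val, by have := i.isLt; omega⟩ = x.2 i)

/-- Step operator of the walk killed at `v`. -/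
noncomputable def killOp {V : Type*} [Fintype V] (G : SimpleGraph V) (v : V) (φ : V → ℝ) (x : V) : ℝ :=
  ∑ y, if y = v then 0 else stepProb G x y * φ y

theorem stepProb_nonneg {V : Type*} [Fintype V] (G : SimpleGraph V) (x y : V) :
    0 ≤ stepProb G x y := by
  unfold stepProb
  split_ifs <;> positivity

theorem walkProb_nonneg {V : Type*} [Fintype V] (G : SimpleGraph V) (n : ℕ) :
    ∀ (x : V) (w : Fin n → V), 0 ≤ walkProb G x w := by
  induction n with
  | zero => intro x w; simp [walkProb]
  | succ n ih => intro x w; exact mul_nonneg (stepProb_nonneg _ _ _) (ih _ _)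

theorem firstHit_one {V : Type*} [Fintype V] (G : SimpleGraph V) (x v : V) :
    firstHitProb G x v 1 = stepProb G x v := by
  unfold firstHitProb
  rw [Finset.sum_eq_single (fun _ => v)]
  · simp [walkProb]
  · intro w hw hne
    exfalso
    apply hne
    funext i
    simp only [Finset.mem_filter] at hw
    exact hw.2.2 i (by omega)
  · intro hh
    exfalso
    apply hh
    simp

theorem firstHit_succ {V : Type*} [Fintype V] (G : SimpleGraph V) (x v : V) (n : ℕ) :
    firstHitProb G x v (n + 2) = killOp G v (fun y => firstHitProb G y v (n + 1)) x := by
  unfold firstHitProb killOp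
  rw [Finset.sum_filter, ← (Fin.consEquiv (fun _ : Fin (n + 2) => V)).sum_comp,
    Fintype.sum_prod_type]
  apply Finset.sum_congr rfl
  intro y _
  by_cases hy : y = v
  · rw [if_pos hy]
    apply Finset.sum_eq_zero
    intro w _
    rw [if_neg]
    intro hc
    have := hc.1 0 (by simp)
    simp [Fin.consEquiv, hy] at this
  · rw [if_neg hy, Finset.mul_sum, Finset.sum_filter]
    apply Finset.sum_congr rfl
    intro w _
    have : walkProb G x ((Fin.consEquiv (fun _ : Fin (n + 2) => V)) (y, w))
        = stepProb G x y * walkProb G y w := by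
      simp [walkProb, Fin.consEquiv]
    rw [this]
    congr 1
    apply propext
    constructor
    · rintro ⟨h1, h2⟩
      refine ⟨fun i hi => ?_, fun i hi => ?_⟩
      · have := h1 i.succ (by simp; omega)
        simpa [Fin.consEquiv] using this
      · have := h2 i.succ (by simp; omega)
        simpa [Fin.consEquiv] using this
    · rintro ⟨h1, h2⟩
      refine ⟨fun i => ?_, fun i => ?_⟩
      · refine Fin.cases ?_ (fun j => ?_) i
        · intro _; simpa [Fin.consEquiv] using hy
        · intro hj
          have := h1 j (by simp at hj; omega)
          simpa [Fin.consEquiv] using this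
      · refine Fin.cases ?_ (fun j => ?_) i
        · intro hj; simp at hj
        · intro hj
          have := h2 j (by simp at hj; omega)
          simpa [Fin.consEquiv] using this

theorem killOp_mono {V : Type*} [Fintype V] (G : SimpleGraph V) (v : V) {φ ψ : V → ℝ}
    (hle : ∀ y, φ y ≤ ψ y) (x : V) : killOp G v φ x ≤ killOp G v ψ x := by
  unfold killOp
  apply Finset.sum_le_sum
  intro y _
  split_ifs
  · exact le_rfl
  · exact mul_le_mul_of_nonneg_left (hle y) (stepProb_nonneg _ _ _)

theorem killOp_sub {V : Type*} [Fintype V] (G : SimpleGraph V) (v : V) (φ ψ : V → ℝ)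
    (x : V) : killOp G v (fun y => φ y - ψ y) x = killOp G v φ x - killOp G v ψ x := by
  unfold killOp
  rw [← Finset.sum_sub_distrib]
  apply Finset.sum_congr rfl
  intro y _
  split_ifs <;> ring

theorem killOp_smul {V : Type*} [Fintype V] (G : SimpleGraph V) (v : V) (φ : V → ℝ) (c : ℝ)
    (x : V) : killOp G v (fun y => c * φ y) x = c * killOp G v φ x := by
  unfold killOp
  rw [Finset.mul_sum]
  apply Finset.sum_congr rfl
  intro y _
  split_ifs <;> ring

theorem killOp_congr {V : Type*} [Fintype V] (G : SimpleGraph V) (v : V) {φ ψ : V → ℝ}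
    (hle : ∀ y, y ≠ v → φ y = ψ y) (x : V) : killOp G v φ x = killOp G v ψ x := by
  unfold killOp
  apply Finset.sum_congr rfl
  intro y _
  split_ifs with hy
  · rfl
  · rw [hle y hy]

theorem stepProb_sum {V : Type*} [Fintype V] (G : SimpleGraph V) (φ : V → ℝ) (x : V) :
    ∑ y, stepProb G x y * φ y = (∑ y, if G.Adj x y then φ y else 0) / G.degree x := by
  rw [Finset.sum_div]
  apply Finset.sum_congr rfl
  intro y _
  unfold stepProb
  split_ifs <;> ring

theorem adj_sum_one {V : Type*} [Fintype V] (G : SimpleGraph V) (x : V) :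
    (∑ y, if G.Adj x y then (1 : ℝ) else 0) = G.degree x := by
  rw [← Finset.sum_filter]
  simp only [Finset.sum_const, nsmul_eq_mul, mul_one]
  rw [← SimpleGraph.card_neighborFinset_eq_degree, SimpleGraph.neighborFinset_eq_filter]

/-- General principle: a nonnegative solution of the first-step equations is the hitting time. -/
theorem hittingTime_eq {V : Type*} [Fintype V] (G : SimpleGraph V) (v : V) (f : V → ℝ)
    (hdeg : ∀ x, 0 < G.degree x) (h0 : ∀ x, 0 ≤ f x) (hv : f v = 0)
    (hf : ∀ x, x ≠ v → (∑ y, if G.Adj x y then (f y - f x + 1) else 0) = 0) (u : V) :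
    hittingTime G u v = f u := by
  unfold hittingTime
  split_ifs with huv
  · rw [huv, hv]
  have hfQ : ∀ x, killOp G v f x = ∑ y, stepProb G x y * f y := by
    intro x
    unfold killOp
    apply Finset.sum_congr rfl
    intro y _
    split_ifs with hy
    · rw [hy, hv, mul_zero]
    · rfl
  set F : V → ℝ := fun x => 1 + killOp G v f x with hF
  have hFf : ∀ x, x ≠ v → F x = f x := by
    intro x hx
    have h1 := hf x hx
    have hd : (0 : ℝ) < G.degree x := by exact_mod_cast hdeg x
    have h2 : (∑ y, if G.Adj x y then (f y - f x + 1) else 0)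
        = (∑ y, if G.Adj x y then f y else 0)
          - (f x - 1) * ∑ y, if G.Adj x y then (1 : ℝ) else 0 := by
      rw [Finset.mul_sum, ← Finset.sum_sub_distrib]
      apply Finset.sum_congr rfl
      intro y _
      split_ifs <;> ring
    rw [h2, adj_sum_one] at h1
    simp only [hF]
    rw [hfQ, stepProb_sum]
    have h3 : (∑ y, if G.Adj x y then f y else 0) = (f x - 1) * G.degree x := by linarith
    rw [h3]
    field_simp
    ring
  have hFF : ∀ x, F x = 1 + killOp G v F x := by
    intro x
    rw [killOp_congr G v hFf x]
  have hF1 : ∀ x, 1 ≤ F x := by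
    intro x
    have : 0 ≤ killOp G v f x := by
      rw [hfQ]
      exact Finset.sum_nonneg fun y _ => mul_nonneg (stepProb_nonneg _ _ _) (h0 y)
    simp only [hF]; linarith
  obtain ⟨C, hC⟩ : ∃ C : ℝ, ∀ x, F x ≤ C :=
    ⟨∑ x, F x, fun x => Finset.single_le_sum (f := F)
      (fun y _ => by linarith [hF1 y]) (Finset.mem_univ x)⟩
  have hC1 : 1 ≤ C := (hF1 u).trans (hC u)
  set ρ : ℝ := 1 - 1 / C with hρ
  have hρ0 : 0 ≤ ρ := by
    have : 1 / C ≤ 1 := by rw [div_le_one (by linarith)]; exact hC1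
    linarith
  have hρ1 : ρ < 1 := by
    have : 0 < 1 / C := by positivity
    linarith
  have hQF : ∀ x, killOp G v F x ≤ ρ * F x := by
    intro x
    have h1 := hFF x
    have h2 : F x / C ≤ 1 := by rw [div_le_one (by linarith)]; exact hC x
    have h3 : ρ * F x = F x - F x / C := by rw [hρ]; ring
    linarith
  -- survival probabilities and iterates
  let S : ℕ → V → ℝ := fun n => (killOp G v)^[n] (fun _ => 1)
  let T : ℕ → V → ℝ := fun n => (killOp G v)^[n] F
  have hS : ∀ n x, S (n + 1) x = killOp G v (S n) x := by
    intro n x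
    simp only [S, Function.iterate_succ_apply']
  have hT : ∀ n x, T (n + 1) x = killOp G v (T n) x := by
    intro n x
    simp only [T, Function.iterate_succ_apply']
  have hTb : ∀ n x, T n x ≤ ρ ^ n * F x := by
    intro n
    induction n with
    | zero => intro x; simp [T]
    | succ n ih =>
      intro x
      rw [hT]
      calc killOp G v (T n) x ≤ killOp G v (fun y => ρ ^ n * F y) x := killOp_mono G v ih x
        _ = ρ ^ n * killOp G v F x := killOp_smul _ _ _ _ _
        _ ≤ ρ ^ n * (ρ * F x) := mul_le_mul_of_nonneg_left (hQF x) (by positivity)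
        _ = ρ ^ (n + 1) * F x := by ring
  have hST : ∀ n x, S n x ≤ T n x := by
    intro n
    induction n with
    | zero => intro x; simpa [S, T] using hF1 x
    | succ n ih => intro x; rw [hT, hS]; exact killOp_mono G v ih x
  have hS0 : ∀ n x, 0 ≤ S n x := by
    intro n
    induction n with
    | zero => intro x; simp [S]
    | succ n ih =>
      intro x
      rw [hS]
      unfold killOp
      apply Finset.sum_nonneg
      intro y _
      split_ifs
      · exact le_rfl
      · exact mul_nonneg (stepProb_nonneg _ _ _) (ih y)
  have hTS : ∀ n x, T n x - T (n + 1) x = S n x := by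
    intro n
    induction n with
    | zero =>
      intro x
      have := hFF x
      rw [hT]
      simp only [T, S, Function.iterate_zero, id]
      linarith
    | succ n ih =>
      intro x
      rw [hT, hT (n + 1), ← killOp_sub, hS]
      exact killOp_congr G v (fun y _ => ih y) x
  have hp : ∀ n x, firstHitProb G x v (n + 1) = S n x - S (n + 1) x := by
    intro n
    induction n with
    | zero =>
      intro x
      rw [zero_add, firstHit_one]
      have hd : (0 : ℝ) < G.degree x := by exact_mod_cast hdeg x
      have h1 : ∑ y, stepProb G x y * 1 = 1 := by
        rw [stepProb_sum, adj_sum_one]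
        field_simp
      have h2 : killOp G v (fun _ => 1) x = ∑ y, stepProb G x y * 1 - stepProb G x v := by
        unfold killOp
        rw [← Finset.add_sum_erase _ _ (Finset.mem_univ v),
          ← Finset.add_sum_erase _ (fun y => stepProb G x y * 1) (Finset.mem_univ v)]
        rw [if_pos rfl, Finset.sum_congr rfl (fun y hy => if_neg (Finset.ne_of_mem_erase hy))]
        ring
      have := hS 0 x
      rw [this]
      simp only [S, Function.iterate_zero, id]
      rw [h2, h1]
      ring
    | succ n ih =>
      intro x
      rw [firstHit_succ, hS, hS (n + 1), ← killOp_sub]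
      exact killOp_congr G v (fun y _ => ih y) x
  have hpart : ∀ N, ∑ n ∈ Finset.range (N + 1), (n : ℝ) * firstHitProb G u v n
      = F u - T N u - N * S N u := by
    intro N
    induction N with
    | zero => simp [T]
    | succ N ih =>
      rw [Finset.sum_range_succ, ih, hp]
      have := hTS N u
      push_cast
      linarith
  rw [← hFf u huv]
  apply HasSum.tsum_eq
  rw [hasSum_iff_tendsto_nat_of_nonneg]
  · rw [← Filter.tendsto_add_atTop_iff_nat 1]
    simp only [hpart]
    have hT0 : Filter.Tendsto (fun N => T N u) Filter.atTop (nhds 0) := by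
      refine squeeze_zero (fun n => (hS0 n u).trans (hST n u)) (fun n => hTb n u) ?_
      simpa using (tendsto_pow_atTop_nhds_zero_of_lt_one hρ0 hρ1).mul_const (F u)
    have hS0' : Filter.Tendsto (fun N : ℕ => (N : ℝ) * S N u) Filter.atTop (nhds 0) := by
      refine squeeze_zero (g := fun n : ℕ => ((n : ℝ) * ρ ^ n) * F u)
        (fun n => mul_nonneg (by positivity) (hS0 n u)) (fun n => ?_) ?_
      · rw [mul_assoc]
        exact mul_le_mul_of_nonneg_left ((hST n u).trans (hTb n u)) (by positivity)
      · simpa using (tendsto_self_mul_const_pow_of_lt_one hρ0 hρ1).mul_const (F u)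
    simpa using (tendsto_const_nhds.sub hT0).sub hS0'
  · intro n
    apply mul_nonneg (by positivity)
    unfold firstHitProb
    exact Finset.sum_nonneg fun w _ => walkProb_nonneg G n u w

/-- Coordinates of a vertex as natural numbers. -/
def vcoord {d h : ℕ} (x : Σ n : Fin (h + 1), Fin (n : ℕ) → Fin d) (i : ℕ) : ℕ :=
  if hi : i < (x.1 : ℕ) then (x.2 ⟨i, hi⟩ : ℕ) else 0

theorem vcoord_of_lt {d h : ℕ} (x : Σ n : Fin (h + 1), Fin (n : ℕ) → Fin d) (i : ℕ)
    (hi : i < (x.1 : ℕ)) : vcoord x i = (x.2 ⟨i, hi⟩ : ℕ) := by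
  simp [vcoord, hi]

theorem vext {d h : ℕ} (x y : Σ n : Fin (h + 1), Fin (n : ℕ) → Fin d)
    (h1 : (x.1 : ℕ) = y.1) (h2 : ∀ i < (x.1 : ℕ), vcoord x i = vcoord y i) : x = y := by
  obtain ⟨n, x⟩ := x
  obtain ⟨m, y⟩ := y
  obtain rfl : n = m := Fin.ext h1
  congr 1
  funext i
  have := h2 i i.isLt
  rw [vcoord_of_lt _ _ i.isLt, vcoord_of_lt _ _ i.isLt] at this
  exact Fin.ext this

/-- `y` is a child of `x`. -/
def IsChild {d h : ℕ} (x y : Σ n : Fin (h + 1), Fin (n : ℕ) → Fin d) : Prop :=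
  (x.1 : ℕ) + 1 = y.1 ∧ ∀ i < (x.1 : ℕ), vcoord y i = vcoord x i

theorem adj_iff {d h : ℕ} (x y : Σ n : Fin (h + 1), Fin (n : ℕ) → Fin d) :
    (daryTree d h).Adj x y ↔ IsChild x y ∨ IsChild y x := by
  have key : ∀ x y : Σ n : Fin (h + 1), Fin (n : ℕ) → Fin d,
      (∃ _ : (x.1 : ℕ) + 1 = (y.1 : ℕ),
      ∀ i : Fin (x.1 : ℕ), y.2 ⟨i.val, by have := i.isLt; omega⟩ = x.2 i) ↔ IsChild x y := by
    intro x y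
    constructor
    · rintro ⟨h1, h2⟩
      refine ⟨h1, fun i hi => ?_⟩
      rw [vcoord_of_lt _ _ hi, vcoord_of_lt _ _ (by omega)]
      exact congrArg Fin.val (h2 ⟨i, hi⟩)
    · rintro ⟨h1, h2⟩
      refine ⟨h1, fun i => ?_⟩
      have := h2 i i.isLt
      rw [vcoord_of_lt _ _ i.isLt, vcoord_of_lt _ _ (by omega)] at this
      exact Fin.ext this
  unfold daryTree
  rw [SimpleGraph.fromRel_adj, key, key]
  constructor
  · exact fun hh => hh.2
  · intro hh
    refine ⟨?_, hh⟩
    rintro rfl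
    rcases hh with hh | hh <;> exact absurd hh.1 (by omega)

/-- The child of `x` labelled `c`. -/
def vchild {d h : ℕ} (x : Σ n : Fin (h + 1), Fin (n : ℕ) → Fin d) (hx : (x.1 : ℕ) < h)
    (c : Fin d) : Σ n : Fin (h + 1), Fin (n : ℕ) → Fin d :=
  ⟨⟨x.1 + 1, by omega⟩, fun i => if hi : (i : ℕ) < x.1 then x.2 ⟨i, hi⟩ else c⟩

theorem vchild_depth {d h : ℕ} (x : Σ n : Fin (h + 1), Fin (n : ℕ) → Fin d)
    (hx : (x.1 : ℕ) < h) (c : Fin d) : ((vchild x hx c).1 : ℕ) = x.1 + 1 := rfl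

theorem vchild_coord_lt {d h : ℕ} (x : Σ n : Fin (h + 1), Fin (n : ℕ) → Fin d)
    (hx : (x.1 : ℕ) < h) (c : Fin d) (i : ℕ) (hi : i < (x.1 : ℕ)) :
    vcoord (vchild x hx c) i = vcoord x i := by
  rw [vcoord_of_lt _ _ hi, vcoord_of_lt _ _ (by rw [vchild_depth]; omega)]
  simp [vchild, hi]

theorem vchild_coord_eq {d h : ℕ} (x : Σ n : Fin (h + 1), Fin (n : ℕ) → Fin d)
    (hx : (x.1 : ℕ) < h) (c : Fin d) :
    vcoord (vchild x hx c) (x.1 : ℕ) = c := by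
  rw [vcoord_of_lt _ _ (by rw [vchild_depth]; omega)]
  simp [vchild]

theorem isChild_vchild {d h : ℕ} (x : Σ n : Fin (h + 1), Fin (n : ℕ) → Fin d)
    (hx : (x.1 : ℕ) < h) (c : Fin d) : IsChild x (vchild x hx c) :=
  ⟨rfl, fun i hi => vchild_coord_lt x hx c i hi⟩

theorem sum_children {d h : ℕ} (x : Σ n : Fin (h + 1), Fin (n : ℕ) → Fin d)
    (hx : (x.1 : ℕ) < h) (φ : (Σ n : Fin (h + 1), Fin (n : ℕ) → Fin d) → ℝ) :
    (∑ y, if IsChild x y then φ y else 0) = ∑ c, φ (vchild x hx c) := by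
  rw [← Finset.sum_filter]
  symm
  refine Finset.sum_bij (fun c _ => vchild x hx c) ?_ ?_ ?_ ?_
  · intro c _
    simp [isChild_vchild]
  · intro c _ c' _ heq
    have := congrArg (fun z => vcoord z (x.1 : ℕ)) heq
    simp only [vchild_coord_eq] at this
    exact Fin.ext this
  · intro y hy
    simp only [Finset.mem_filter] at hy
    have hy' := hy.2
    refine ⟨y.2 ⟨x.1, by have := hy'.1; omega⟩, Finset.mem_univ _, ?_⟩
    apply vext
    · rw [vchild_depth, hy'.1]
    · intro i hi
      rw [vchild_depth] at hi
      rcases Nat.lt_succ_iff_lt_or_eq.mp hi with hi | rfl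
      · rw [vchild_coord_lt _ _ _ _ hi, hy'.2 i hi]
      · rw [vchild_coord_eq, vcoord_of_lt]
  · intro c _
    rfl

theorem sum_children_leaf {d h : ℕ} (x : Σ n : Fin (h + 1), Fin (n : ℕ) → Fin d)
    (hx : (x.1 : ℕ) = h) (φ : (Σ n : Fin (h + 1), Fin (n : ℕ) → Fin d) → ℝ) :
    (∑ y, if IsChild x y then φ y else 0) = 0 := by
  apply Finset.sum_eq_zero
  intro y _
  rw [if_neg]
  intro hc
  have := hc.1
  have := y.1.isLt
  omega

theorem exists_parent {d h : ℕ} (x : Σ n : Fin (h + 1), Fin (n : ℕ) → Fin d)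
    (hx : 0 < (x.1 : ℕ)) : ∃ p, IsChild p x := by
  refine ⟨⟨⟨x.1 - 1, by omega⟩, fun i => x.2 ⟨i, by
    have h1 : (i : ℕ) < (x.1 : ℕ) - 1 := i.isLt
    omega⟩⟩, ?_, ?_⟩
  · simp; omega
  · intro i hi
    simp at hi
    rw [vcoord_of_lt _ _ (by omega), vcoord_of_lt _ _ (by simpa using hi)]

theorem parent_unique {d h : ℕ} (x p q : Σ n : Fin (h + 1), Fin (n : ℕ) → Fin d)
    (hp : IsChild p x) (hq : IsChild q x) : p = q := by
  have h1 := hp.1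
  have h2 := hq.1
  apply vext
  · omega
  · intro i hi
    rw [← hp.2 i hi, ← hq.2 i (by omega)]

theorem sum_parent {d h : ℕ} (x p : Σ n : Fin (h + 1), Fin (n : ℕ) → Fin d)
    (hp : IsChild p x) (φ : (Σ n : Fin (h + 1), Fin (n : ℕ) → Fin d) → ℝ) :
    (∑ y, if IsChild y x then φ y else 0) = φ p := by
  rw [Finset.sum_eq_single p]
  · rw [if_pos hp]
  · intro y _ hy
    rw [if_neg]
    intro hc
    exact hy (parent_unique x y p hc hp)
  · simp

theorem sum_parent_root {d h : ℕ} (x : Σ n : Fin (h + 1), Fin (n : ℕ) → Fin d)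
    (hx : (x.1 : ℕ) = 0) (φ : (Σ n : Fin (h + 1), Fin (n : ℕ) → Fin d) → ℝ) :
    (∑ y, if IsChild y x then φ y else 0) = 0 := by
  apply Finset.sum_eq_zero
  intro y _
  rw [if_neg]
  intro hc
  have := hc.1
  omega

theorem adj_sum {d h : ℕ} (x : Σ n : Fin (h + 1), Fin (n : ℕ) → Fin d)
    (φ : (Σ n : Fin (h + 1), Fin (n : ℕ) → Fin d) → ℝ) :
    (∑ y, if (daryTree d h).Adj x y then φ y else 0)
      = (∑ y, if IsChild x y then φ y else 0) + ∑ y, if IsChild y x then φ y else 0 := by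
  rw [← Finset.sum_add_distrib]
  apply Finset.sum_congr rfl
  intro y _
  by_cases h1 : IsChild x y
  · have h2 : ¬ IsChild y x := by
      intro h2
      have := h1.1
      have := h2.1
      omega
    simp [adj_iff, h1, h2]
  · by_cases h2 : IsChild y x <;> simp [adj_iff, h1, h2]

/-- `1 +` cost of a downward step into depth `k` along the path. -/
noncomputable def dcost (d h k : ℕ) : ℝ := 2 * ∑ i ∈ Finset.range k, (d : ℝ) ^ (h - i)

/-- `1 +` cost of an upward step from depth `k`. -/
noncomputable def ucost (d h k : ℕ) : ℝ := 2 * ∑ i ∈ Finset.range (h + 1 - k), (d : ℝ) ^ i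

theorem g_eq (d h m : ℕ) : g h m d = ∑ j ∈ Finset.range m, (dcost d h (j + 1) - 1) := by
  have h1 : g h m d = (∑ i ∈ Finset.range m, ((2 * m : ℝ) - 2 * i) * (d : ℝ) ^ (h - i)) - m := by
    unfold g
    split_ifs with hm
    · simp [hm]
    · rfl
  rw [h1]
  clear h1
  induction m with
  | zero => simp
  | succ m ih =>
    rw [Finset.sum_range_succ (fun j => dcost d h (j + 1) - 1) m, ← ih]
    unfold dcost
    have : ∑ i ∈ Finset.range (m + 1), ((2 * (m + 1 : ℕ) : ℝ) - 2 * i) * (d : ℝ) ^ (h - i)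
      = ∑ i ∈ Finset.range (m + 1), ((2 * m : ℝ) - 2 * i) * (d : ℝ) ^ (h - i)
        + 2 * ∑ i ∈ Finset.range (m + 1), (d : ℝ) ^ (h - i) := by
      rw [Finset.mul_sum, ← Finset.sum_add_distrib]
      apply Finset.sum_congr rfl
      intro i _
      push_cast
      ring
    rw [this, Finset.sum_range_succ (fun i : ℕ => ((2 * m : ℝ) - 2 * i) * (d : ℝ) ^ (h - i))]
    push_cast
    ring

theorem dcost_succ (d h k : ℕ) : dcost d h (k + 1) = dcost d h k + 2 * (d : ℝ) ^ (h - k) := by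
  unfold dcost
  rw [Finset.sum_range_succ]
  ring

theorem ucost_rec (d h k : ℕ) (hk : k < h) :
    (d : ℝ) * ucost d h (k + 1) = ucost d h k - 2 := by
  unfold ucost
  rw [show h + 1 - k = (h + 1 - (k + 1)) + 1 by omega, Finset.sum_range_succ']
  simp only [pow_succ, pow_zero]
  rw [← Finset.sum_mul]
  ring

theorem ucost_rec' (d h k : ℕ) (hk : k < h) :
    ucost d h k = ucost d h (k + 1) + 2 * (d : ℝ) ^ (h - k) := by
  unfold ucost
  rw [show h + 1 - k = (h - k) + 1 by omega, show h + 1 - (k + 1) = h - k by omega,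
    Finset.sum_range_succ]
  ring

theorem dcost_ge (d h k : ℕ) (hd : 1 ≤ d) : 1 ≤ dcost d h (k + 1) := by
  rw [dcost_succ]
  have h1 : (1 : ℝ) ≤ (d : ℝ) ^ (h - k) := one_le_pow₀ (by exact_mod_cast hd)
  have h2 : 0 ≤ dcost d h k := by unfold dcost; positivity
  linarith

theorem ucost_ge (d h k : ℕ) (hk : k ≤ h) : 1 ≤ ucost d h k := by
  unfold ucost
  rw [show h + 1 - k = (h - k) + 1 by omega, Finset.sum_range_succ']
  have : 0 ≤ ∑ i ∈ Finset.range (h - k), (d : ℝ) ^ (i + 1) := by positivity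
  simp only [pow_zero]
  linarith

/-- `x` and `v` agree on the first `j` coordinates. -/
def Agree {d h : ℕ} (v x : Σ n : Fin (h + 1), Fin (n : ℕ) → Fin d) (j : ℕ) : Prop :=
  ∀ i < j, vcoord x i = vcoord v i

/-- Increment of the potential at depth `j + 1`. -/
noncomputable def vinc {d h : ℕ} (v x : Σ n : Fin (h + 1), Fin (n : ℕ) → Fin d) (j : ℕ) : ℝ :=
  if Agree v x (j + 1) then -(dcost d h (j + 1) - 1) else ucost d h (j + 1) - 1

/-- Explicit expected hitting times. -/
noncomputable def pot {d h : ℕ} (v x : Σ n : Fin (h + 1), Fin (n : ℕ) → Fin d) : ℝ :=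
  g h h d + ∑ j ∈ Finset.range (x.1 : ℕ), vinc v x j

theorem pot_child {d h : ℕ} (v x y : Σ n : Fin (h + 1), Fin (n : ℕ) → Fin d)
    (hxy : IsChild x y) : pot v y = pot v x + vinc v y (x.1 : ℕ) := by
  unfold pot
  rw [← hxy.1, Finset.sum_range_succ, ← add_assoc]
  congr 2
  apply Finset.sum_congr rfl
  intro j hj
  rw [Finset.mem_range] at hj
  unfold vinc
  have : Agree v y (j + 1) ↔ Agree v x (j + 1) := by
    unfold Agree
    refine forall₂_congr fun i hi => ?_
    rw [hxy.2 i (by omega)]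
  simp only [this]

theorem pot_agree {d h : ℕ} (v x : Σ n : Fin (h + 1), Fin (n : ℕ) → Fin d)
    (hx : Agree v x (x.1 : ℕ)) : pot v x = g h h d - g h (x.1 : ℕ) d := by
  unfold pot
  rw [g_eq d h (x.1 : ℕ), sub_eq_add_neg, ← Finset.sum_neg_distrib]
  congr 1
  apply Finset.sum_congr rfl
  intro j hj
  rw [Finset.mem_range] at hj
  unfold vinc
  rw [if_pos]
  intro i hi
  exact hx i (by omega)

theorem pot_nonneg {d h : ℕ} (hd : 1 ≤ d) (v x : Σ n : Fin (h + 1), Fin (n : ℕ) → Fin d) :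
    0 ≤ pot v x := by
  unfold pot
  have hx : (x.1 : ℕ) ≤ h := by have := x.1.isLt; omega
  have h1 : ∑ j ∈ Finset.range (x.1 : ℕ), (dcost d h (j + 1) - 1) ≤ g h h d := by
    rw [g_eq]
    apply Finset.sum_le_sum_of_subset_of_nonneg
    · intro j; simp only [Finset.mem_range]; omega
    · intro j _ _
      linarith [dcost_ge d h j hd]
  have h2 : 0 ≤ ∑ j ∈ Finset.range (x.1 : ℕ), ((dcost d h (j + 1) - 1) + vinc v x j) := by
    apply Finset.sum_nonneg
    intro j hj
    rw [Finset.mem_range] at hj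
    unfold vinc
    split_ifs
    · linarith
    · linarith [dcost_ge d h j hd, ucost_ge d h (j + 1) (by omega)]
  rw [Finset.sum_add_distrib] at h2
  linarith

theorem sum_child_inc_off {d h : ℕ} (v x : Σ n : Fin (h + 1), Fin (n : ℕ) → Fin d)
    (hx : (x.1 : ℕ) < h) (ha : ¬ Agree v x (x.1 : ℕ)) :
    ∑ c, (vinc v (vchild x hx c) (x.1 : ℕ) + 1) = d * ucost d h ((x.1 : ℕ) + 1) := by
  rw [Finset.sum_congr rfl (g := fun _ => ucost d h ((x.1 : ℕ) + 1))]
  · simp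
  · intro c _
    unfold vinc
    rw [if_neg]
    · ring
    · intro hc
      apply ha
      intro i hi
      rw [← hc i (by omega), vchild_coord_lt _ _ _ _ hi]

theorem sum_child_inc_on {d h : ℕ} (v x : Σ n : Fin (h + 1), Fin (n : ℕ) → Fin d)
    (hv : (v.1 : ℕ) = h) (hx : (x.1 : ℕ) < h) (ha : Agree v x (x.1 : ℕ)) :
    ∑ c, (vinc v (vchild x hx c) (x.1 : ℕ) + 1)
      = d * ucost d h ((x.1 : ℕ) + 1) - ucost d h ((x.1 : ℕ) + 1)
        - dcost d h ((x.1 : ℕ) + 1) + 2 := by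
  have hvx : (x.1 : ℕ) < v.1 := by omega
  have key : ∀ c : Fin d, vinc v (vchild x hx c) (x.1 : ℕ) + 1 = ucost d h ((x.1 : ℕ) + 1)
      + if c = v.2 ⟨x.1, hvx⟩ then - ucost d h ((x.1 : ℕ) + 1)
        - dcost d h ((x.1 : ℕ) + 1) + 2 else 0 := by
    intro c
    have : Agree v (vchild x hx c) ((x.1 : ℕ) + 1) ↔ c = v.2 ⟨x.1, hvx⟩ := by
      constructor
      · intro hc
        have := hc (x.1 : ℕ) (by omega)
        rw [vchild_coord_eq, vcoord_of_lt _ _ hvx] at this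
        exact Fin.ext this
      · intro hc i hi
        rcases Nat.lt_succ_iff_lt_or_eq.mp hi with hi | rfl
        · rw [vchild_coord_lt _ _ _ _ hi, ha i hi]
        · rw [vchild_coord_eq, vcoord_of_lt _ _ hvx, hc]
    unfold vinc
    simp only [this]
    split_ifs <;> ring
  rw [Finset.sum_congr rfl (fun c _ => key c), Finset.sum_add_distrib, Finset.sum_ite_eq']
  simp
  ring

theorem pot_harmonic {d h : ℕ} (v x : Σ n : Fin (h + 1), Fin (n : ℕ) → Fin d)
    (hv : (v.1 : ℕ) = h) (hxv : x ≠ v) :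
    (∑ y, if (daryTree d h).Adj x y then (pot v y - pot v x + 1) else 0) = 0 := by
  rw [adj_sum]
  have hle : (x.1 : ℕ) ≤ h := by have := x.1.isLt; omega
  -- children
  have hch : ∀ hx : (x.1 : ℕ) < h, (∑ y, if IsChild x y then (pot v y - pot v x + 1) else 0)
      = ∑ c, (vinc v (vchild x hx c) (x.1 : ℕ) + 1) := by
    intro hx
    rw [sum_children x hx]
    apply Finset.sum_congr rfl
    intro c _
    rw [pot_child v x _ (isChild_vchild x hx c)]
    ring
  by_cases ha : Agree v x (x.1 : ℕ)
  · have hx : (x.1 : ℕ) < h := by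
      refine lt_of_le_of_ne hle fun he => hxv (vext x v (by omega) ha)
    rw [hch hx, sum_child_inc_on v x hv hx ha]
    have hpar : (∑ y, if IsChild y x then (pot v y - pot v x + 1) else 0)
        = dcost d h (x.1 : ℕ) := by
      rcases Nat.eq_zero_or_pos (x.1 : ℕ) with h0 | h0
      · rw [sum_parent_root x h0, h0]
        simp [dcost]
      · obtain ⟨p, hp⟩ := exists_parent x h0
        rw [sum_parent x p hp, pot_child v p x hp]
        unfold vinc
        rw [hp.1, if_pos ha]
        ring
    rw [hpar, dcost_succ]
    have h1 := ucost_rec d h x.1 hx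
    have h2 := ucost_rec' d h x.1 hx
    linarith
  · have h0 : 0 < (x.1 : ℕ) := by
      by_contra h0
      apply ha
      intro i hi
      omega
    obtain ⟨p, hp⟩ := exists_parent x h0
    have hpar : (∑ y, if IsChild y x then (pot v y - pot v x + 1) else 0)
        = 2 - ucost d h (x.1 : ℕ) := by
      rw [sum_parent x p hp, pot_child v p x hp]
      unfold vinc
      rw [hp.1, if_neg ha]
      ring
    rw [hpar]
    rcases hle.lt_or_eq with hx | hx
    · rw [hch hx, sum_child_inc_off v x hx ha]
      have h1 := ucost_rec d h x.1 hx
      linarith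
    · rw [sum_children_leaf x hx, hx]
      simp [ucost]

theorem tree_degree_pos {d h : ℕ} (hd : 1 ≤ d) (hh : 0 < h)
    (x : Σ n : Fin (h + 1), Fin (n : ℕ) → Fin d) : 0 < (daryTree d h).degree x := by
  rw [SimpleGraph.degree_pos_iff_exists_adj]
  rcases Nat.eq_zero_or_pos (x.1 : ℕ) with h0 | h0
  · refine ⟨vchild x (by omega) ⟨0, hd⟩, ?_⟩
    rw [adj_iff]
    exact Or.inl (isChild_vchild x _ _)
  · obtain ⟨p, hp⟩ := exists_parent x h0
    exact ⟨p, (adj_iff x p).2 (Or.inr hp)⟩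

theorem stmt_15 (d h : ℕ) (hd : 1 ≤ d)
    (v : Σ n : Fin (h + 1), Fin (n : ℕ) → Fin d) (hv : (v.1 : ℕ) = h)
    (l : ℕ) (hl : l ≤ h)
    (a : Σ n : Fin (h + 1), Fin (n : ℕ) → Fin d) (ha : (a.1 : ℕ) = h - l)
    (hanc : ∀ i : Fin (a.1 : ℕ), a.2 i = v.2 ⟨i.val, by have := i.isLt; omega⟩) :
    hittingTime (daryTree d h) a v = g h h d - g h (h - l) d := by
  have hag : Agree v a (a.1 : ℕ) := by
    intro i hi
    rw [vcoord_of_lt _ _ hi, vcoord_of_lt _ _ (by omega)]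
    exact congrArg Fin.val (hanc ⟨i, hi⟩)
  rcases Nat.eq_zero_or_pos h with hh | hh
  · have hav : a = v := vext a v (by omega) hag
    unfold hittingTime
    rw [if_pos hav]
    simp [hh]
  · have hpv : pot v v = 0 := by
      rw [pot_agree v v (fun i _ => rfl), hv, sub_self]
    rw [hittingTime_eq (daryTree d h) v (pot v) (tree_degree_pos hd hh) (pot_nonneg hd v) hpv
      (fun x hx => pot_harmonic v x hv hx) a, pot_agree v a hag, ha]
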